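/- arXiv:2401.15308 — 5 statements merged into one kernel-verified Lean document; each statement's English description precedes it below -/
import Mathlib

section
/- Let F be a finite field, let h ∈ F[x] be a monic polynomial of degree u ≥ 1, let 0 < r ≤ u, and let y_1, …, y_s ∈ F be pairwise distinct. Suppose f ∈ F[x] has deg(f) < s·u and, for each i ∈ {1,…,s}, the remainder f_i of f upon division by h(x) − y_i has degree < r; write f_i(x) = Σ_{j=0}^{r−1} e_{i,j} x^j. Then there exist polynomials H_0, …, H_{r−1} ∈ F[x] with deg(H_j) ≤ s − 1 such that H_j(y_i) = e_{i,j} for all i ∈ {1,…,s} and j ∈ {0,…,r−1}, and for every y ∈ F the remainder of f upon division by h(x) − y equals Σ_{j=0}^{r−1} H_j(y) x^j. -/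
open Polynomial

/-!
Write `f = f₀ + h q` with `deg f₀ < deg h`. As `h ≡ z` modulo `h - z`, the remainder of `f` modulo
`h - z` is `f₀ + z * (q mod h - z)`. Iterating at most `s` times, the `j`-th coefficient of this
remainder is `Pⱼ(z)` for a polynomial `Pⱼ` of degree `< s` that does not depend on `z`. If the
remainders at `s` distinct points have degree `< r`, then each `Pⱼ` with `j ≥ r` has `s` distinct
roots and so vanishes.
-/

theorem eq_sum_fin_C_coeff_mul_X_pow {R : Type*} [Semiring R] {p : R[X]} {n : ℕ}
    (hp : p.degree < n) : p = ∑ j : Fin n, C (p.coeff j) * X ^ (j : ℕ) := by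
  rcases eq_or_ne p 0 with rfl | hne
  · simp
  · rw [Fin.sum_univ_eq_sum_range (fun j => C (p.coeff j) * X ^ j) n]
    exact p.as_sum_range_C_mul_X_pow' ((natDegree_lt_iff_degree_lt hne).mpr hp)

section Ring

variable {R : Type*} [Ring R] {h : R[X]}

theorem degree_divByMonic_lt_of_degree_lt_add (hmonic : h.Monic) {f : R[X]} {m : ℕ}
    (hf : f.degree < ((m + h.natDegree : ℕ) : WithBot ℕ)) : (f /ₘ h).degree < m := by
  nontriviality R
  rcases lt_or_ge f.degree h.degree with hlt | hle
  · rw [(divByMonic_eq_zero_iff hmonic).mpr hlt, degree_zero]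
    exact WithBot.bot_lt_coe m
  · rw [← degree_add_divByMonic hmonic hle, Nat.cast_add, ← degree_eq_natDegree hmonic.ne_zero,
      add_comm] at hf
    exact lt_of_add_lt_add_right hf

theorem modByMonic_sub_eq_add (hmonic : h.Monic) {g : R[X]} (hg : g.degree < h.degree)
    (f : R[X]) : f %ₘ (h - g) = f %ₘ h + (g * (f /ₘ h)) %ₘ (h - g) := by
  nontriviality R
  have hmonic_sub : (h - g).Monic := hmonic.sub_of_left hg
  have hdegree : (h - g).degree = h.degree := degree_sub_eq_left_of_degree_lt hg
  set q := f /ₘ h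
  refine (div_modByMonic_unique (q + (g * q) /ₘ (h - g)) _ hmonic_sub ⟨?_, ?_⟩).2
  · calc f %ₘ h + (g * q) %ₘ (h - g) + (h - g) * (q + (g * q) /ₘ (h - g))
      _ = f %ₘ h + (h - g) * q + ((g * q) %ₘ (h - g) + (h - g) * ((g * q) /ₘ (h - g))) := by
        rw [mul_add]; abel
      _ = f %ₘ h + (h - g) * q + g * q := by rw [modByMonic_add_div]
      _ = f %ₘ h + h * q := by rw [sub_mul]; abel
      _ = f := modByMonic_add_div f h
  · refine (degree_add_le _ _).trans_lt (max_lt ?_ (degree_modByMonic_lt _ hmonic_sub))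
    exact hdegree ▸ degree_modByMonic_lt f hmonic

end Ring

section CommRing

variable {R : Type*} [CommRing R] {h : R[X]}

theorem modByMonic_sub_C_eq_add_smul (hmonic : h.Monic) (hpos : 0 < h.degree) (f : R[X]) (z : R) :
    f %ₘ (h - C z) = f %ₘ h + z • ((f /ₘ h) %ₘ (h - C z)) := by
  rw [modByMonic_sub_eq_add hmonic (degree_C_le.trans_lt hpos), ← smul_eq_C_mul, smul_modByMonic]

theorem exists_eval_eq_coeff_modByMonic_sub_C (hmonic : h.Monic) (hpos : 0 < h.degree) {s : ℕ}
    {f : R[X]} (hf : f.degree < ((s * h.natDegree : ℕ) : WithBot ℕ)) :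
    ∃ P : ℕ → R[X], (∀ j, (P j).degree < s) ∧
      ∀ z j, (P j).eval z = (f %ₘ (h - C z)).coeff j := by
  induction s generalizing f with
  | zero =>
    obtain rfl : f = 0 := by simpa using hf
    exact ⟨0, by simp, by simp⟩
  | succ s ih =>
    rw [Nat.succ_mul] at hf
    obtain ⟨Q, hQ_degree, hQ_eval⟩ := ih (degree_divByMonic_lt_of_degree_lt_add hmonic hf)
    refine ⟨fun j => X * Q j + C ((f %ₘ h).coeff j), fun j => ?_, fun z j => ?_⟩
    · rw [degree_lt_iff_coeff_zero]
      rintro (_ | m) hm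
      · omega
      · simpa using (degree_lt_iff_coeff_zero _ _).mp (hQ_degree j) m (by omega)
    · simp [modByMonic_sub_C_eq_add_smul hmonic hpos f z, hQ_eval, add_comm]

end CommRing

theorem stmt_0_general {R : Type*} [CommRing R] [IsDomain R]
    (h : R[X]) (u r s : ℕ) (hu : 1 ≤ u) (hmonic : h.Monic) (hdeg : h.natDegree = u)
    (y : Fin s → R) (hy : Function.Injective y)
    (f : R[X]) (hf : f.degree < ((s * u : ℕ) : WithBot ℕ))
    (hres : ∀ i : Fin s, (f %ₘ (h - C (y i))).degree < ((r : ℕ) : WithBot ℕ)) :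
    ∃ H : Fin r → R[X],
      (∀ j, (H j).degree ≤ ((s - 1 : ℕ) : WithBot ℕ)) ∧
      (∀ (i : Fin s) (j : Fin r),
        (H j).eval (y i) = (f %ₘ (h - C (y i))).coeff (j : ℕ)) ∧
      (∀ z : R, f %ₘ (h - C z) = ∑ j : Fin r, C ((H j).eval z) * X ^ (j : ℕ)) := by
  subst hdeg
  obtain ⟨P, hP_degree, hP_eval⟩ :=
    exists_eval_eq_coeff_modByMonic_sub_C hmonic (natDegree_pos_iff_degree_pos.mp hu) hf
  have hP_zero (j : ℕ) (hj : r ≤ j) : P j = 0 :=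
    eq_zero_of_degree_lt_of_eval_index_eq_zero Finset.univ hy.injOn (by simpa using hP_degree j)
      fun i _ => (hP_eval (y i) j).trans ((degree_lt_iff_coeff_zero _ r).mp (hres i) j hj)
  have hrem_degree (z : R) : (f %ₘ (h - C z)).degree < r :=
    (degree_lt_iff_coeff_zero _ r).mpr fun j hj => by rw [← hP_eval, hP_zero j hj, eval_zero]
  refine ⟨fun j => P j, fun j => ?_, fun i j => hP_eval (y i) j, fun z => ?_⟩
  · refine (degree_le_iff_coeff_zero _ _).mpr fun m hm => ?_
    have hsm : s ≤ m := Nat.le_of_pred_lt (Nat.cast_lt.mp hm)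
    exact (degree_lt_iff_coeff_zero _ s).mp (hP_degree j) m hsm
  · simpa only [hP_eval] using eq_sum_fin_C_coeff_mul_X_pow (hrem_degree z)

/-- Lemma 3 (cross-rack RS property): if `f` has degree `< s*u` and its remainder
modulo `h - y i` has degree `< r` for `s` distinct points `y i`, then there are
polynomials `H j` of degree `≤ s - 1` interpolating the coefficients of the
residues, and for every `y` the remainder of `f` mod `h - y` is `∑ H j (y) x^j`. -/
theorem stmt_0 {F : Type*} [Field F] [Fintype F]
    (h : F[X]) (u r s : ℕ) (hu : 1 ≤ u) (hmonic : h.Monic) (hdeg : h.natDegree = u)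
    (hr : 0 < r) (hru : r ≤ u)
    (y : Fin s → F) (hy : Function.Injective y)
    (f : F[X]) (hf : f.degree < ((s * u : ℕ) : WithBot ℕ))
    (hres : ∀ i : Fin s, (f %ₘ (h - C (y i))).degree < ((r : ℕ) : WithBot ℕ)) :
    ∃ H : Fin r → F[X],
      (∀ j, (H j).degree ≤ ((s - 1 : ℕ) : WithBot ℕ)) ∧
      (∀ (i : Fin s) (j : Fin r),
        (H j).eval (y i) = (f %ₘ (h - C (y i))).coeff (j : ℕ)) ∧
      (∀ z : F, f %ₘ (h - C z) = ∑ j : Fin r, C ((H j).eval z) * X ^ (j : ℕ)) :=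
  stmt_0_general h u r s hu hmonic hdeg y hy f hf hres
end

section
/- Let F be a finite field, let h ∈ F[x] be a monic polynomial of degree u ≥ 1, let 0 < r ≤ u, and let y_1, …, y_s ∈ F be pairwise distinct. Suppose f ∈ F[x] has deg(f) < s·u and, for each i ∈ {1,…,s}, the remainder f_i of f upon division by h(x) − y_i has degree < r. Then f(x) = Σ_{i=1}^{s} f_i(x) · Π_{j≠i} (h(x) − y_j)/(y_i − y_j); in particular deg(f) ≤ u(s−1) + r − 1. -/
open Polynomial

/-!
Substituting `h` for `X` in the Lagrange basis polynomials with nodes `v i` turns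
`L i (v k) = δ i k` into the congruences `L i (h) ≡ δ i k` modulo `h - v k`. Hence
`∑ i, g i * L i (h)` solves the Chinese remainder problem with residues `g i`, and a solution of
degree less than that of `∏ i, (h - v i)` is unique.
-/

theorem degree_le_sub_one_of_degree_lt {R : Type*} [Semiring R] {p : R[X]} {n : ℕ}
    (hp : p.degree < n) : p.degree ≤ (n - 1 : ℕ) :=
  (degree_le_iff_coeff_zero _ _).mpr fun m hm ↦
    (degree_lt_iff_coeff_zero _ _).mp hp m (Nat.le_of_pred_lt (Nat.cast_lt.mp hm))

section CommRing

variable {R : Type*} [CommRing R]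

theorem monic_sub_C_of_natDegree_pos {h : R[X]} (hmonic : h.Monic) (hpos : 0 < h.natDegree)
    (a : R) : (h - C a).Monic :=
  hmonic.sub_of_left (degree_C_le.trans_lt (natDegree_pos_iff_degree_pos.mp hpos))

theorem sub_C_dvd_comp_sub_C_eval (h p : R[X]) (a : R) :
    h - C a ∣ p.comp h - C (p.eval a) := by
  simpa using map_dvd (compRingHom h) (X_sub_C_dvd_sub_C_eval (p := p) (a := a))

end CommRing

section Field

variable {F ι : Type*} [Field F] {h : F[X]} {t : Finset ι} {v : ι → F}

theorem isCoprime_sub_C_sub_C (h : F[X]) {a b : F} (hab : a ≠ b) :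
    IsCoprime (h - C a) (h - C b) := by
  simpa using (isCoprime_X_sub_C_of_isUnit_sub (sub_ne_zero.mpr hab).isUnit).map (compRingHom h)

theorem eq_zero_of_degree_lt_of_forall_sub_C_dvd (hmonic : h.Monic) (hpos : 0 < h.natDegree)
    (hv : Set.InjOn v t) {f : F[X]} (hf : f.degree < (t.card * h.natDegree : ℕ))
    (hdvd : ∀ i ∈ t, h - C (v i) ∣ f) : f = 0 := by
  have hfactor : ∀ i ∈ t, (h - C (v i)).Monic := fun i _ ↦
    monic_sub_C_of_natDegree_pos hmonic hpos (v i)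
  have hprod_dvd : ∏ i ∈ t, (h - C (v i)) ∣ f :=
    Finset.prod_dvd_of_coprime
      (fun i hi j hj hij ↦ isCoprime_sub_C_sub_C h (hv.ne hi hj hij)) hdvd
  have hprod_degree : (∏ i ∈ t, (h - C (v i))).degree = (t.card * h.natDegree : ℕ) := by
    rw [degree_eq_natDegree (monic_prod_of_monic _ _ hfactor).ne_zero,
      natDegree_prod_of_monic _ _ hfactor]
    simp only [natDegree_sub_C, Finset.sum_const, smul_eq_mul]
  exact eq_zero_of_dvd_of_degree_lt hprod_dvd (hprod_degree ▸ hf)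

variable [DecidableEq ι]

theorem lagrange_basis_comp (h : F[X]) (t : Finset ι) (v : ι → F) (i : ι) :
    (Lagrange.basis t v i).comp h =
      ∏ j ∈ t.erase i, (C ((v i - v j)⁻¹) * (h - C (v j))) := by
  simp only [Lagrange.basis, Lagrange.basisDivisor, prod_comp, mul_comp, sub_comp, C_comp, X_comp]

/-- The Lagrange interpolation polynomial in `h` with nodes `v i` and polynomial values `g i`: the
explicit solution of the system of congruences `f ≡ g i` modulo `h - C (v i)`, for `i ∈ t`. -/
noncomputable def compInterpolate (h : F[X]) (t : Finset ι) (v : ι → F) (g : ι → F[X]) : F[X] :=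
  ∑ i ∈ t, g i * (Lagrange.basis t v i).comp h

theorem sub_C_dvd_compInterpolate_sub (h : F[X]) (hv : Set.InjOn v t) (g : ι → F[X]) {k : ι}
    (hk : k ∈ t) : h - C (v k) ∣ compInterpolate h t v g - g k := by
  have hgk : ∑ i ∈ t, g i * C ((Lagrange.basis t v i).eval (v k)) = g k := by
    rw [Finset.sum_eq_single_of_mem k hk fun i _ hik ↦ by
      rw [Lagrange.eval_basis_of_ne hik hk, C_0, mul_zero],
      Lagrange.eval_basis_self hv hk, C_1, mul_one]
  rw [compInterpolate, ← hgk, ← Finset.sum_sub_distrib]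
  simp only [← mul_sub]
  exact Finset.dvd_sum fun i _ ↦ (sub_C_dvd_comp_sub_C_eval h _ (v k)).mul_left (g i)

theorem degree_compInterpolate_lt (h : F[X]) (hv : Set.InjOn v t) {g : ι → F[X]} {r : ℕ}
    (hg : ∀ i ∈ t, (g i).degree < r) :
    (compInterpolate h t v g).degree < (h.natDegree * (t.card - 1) + r : ℕ) := by
  refine (degree_sum_le _ _).trans_lt ((Finset.sup_lt_iff (WithBot.bot_lt_coe _)).mpr fun i hi ↦ ?_)
  have hbasis : ((Lagrange.basis t v i).comp h).degree ≤ (h.natDegree * (t.card - 1) : ℕ) := by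
    refine degree_le_of_natDegree_le ?_
    rw [natDegree_comp, Lagrange.natDegree_basis hv hi, mul_comm]
  calc (g i * (Lagrange.basis t v i).comp h).degree
      ≤ (g i).degree + (h.natDegree * (t.card - 1) : ℕ) :=
        (degree_mul_le _ _).trans (add_le_add_right hbasis _)
    _ < r + (h.natDegree * (t.card - 1) : ℕ) :=
        WithBot.add_lt_add_right (WithBot.natCast_ne_bot _) (hg i hi)
    _ = (h.natDegree * (t.card - 1) + r : ℕ) := by rw [add_comm, Nat.cast_add]

theorem eq_compInterpolate_modByMonic (hmonic : h.Monic) (hpos : 0 < h.natDegree)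
    (hv : Set.InjOn v t) {f : F[X]} (hf : f.degree < (t.card * h.natDegree : ℕ)) :
    f = compInterpolate h t v fun i ↦ f %ₘ (h - C (v i)) := by
  rcases t.eq_empty_or_nonempty with rfl | ht
  · simpa [compInterpolate] using hf
  have hmod (i : ι) : (f %ₘ (h - C (v i))).degree < h.natDegree := by
    have hi := monic_sub_C_of_natDegree_pos hmonic hpos (v i)
    simpa only [degree_eq_natDegree hi.ne_zero, natDegree_sub_C] using degree_modByMonic_lt f hi
  have hcard : h.natDegree * (t.card - 1) + h.natDegree = t.card * h.natDegree := by
    rw [← Nat.mul_succ, Nat.succ_eq_add_one, Nat.sub_add_cancel ht.card_pos, mul_comm]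
  have hinterp := degree_compInterpolate_lt h hv fun i _ ↦ hmod i
  rw [hcard] at hinterp
  refine sub_eq_zero.mp (eq_zero_of_degree_lt_of_forall_sub_C_dvd hmonic hpos hv
    ((degree_sub_le _ _).trans_lt (max_lt hf hinterp)) fun k hk ↦ ?_)
  have hfk : h - C (v k) ∣ f - f %ₘ (h - C (v k)) :=
    ⟨f /ₘ (h - C (v k)), sub_eq_iff_eq_add'.mpr (modByMonic_add_div f _).symm⟩
  simpa only [sub_sub_sub_cancel_right] using
    dvd_sub hfk (sub_C_dvd_compInterpolate_sub h hv (fun i ↦ f %ₘ (h - C (v i))) hk)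

theorem stmt_1_general (hmonic : h.Monic) (hpos : 0 < h.natDegree) (hv : Set.InjOn v t)
    {f : F[X]} (hf : f.degree < (t.card * h.natDegree : ℕ)) {r : ℕ}
    (hres : ∀ i ∈ t, (f %ₘ (h - C (v i))).degree < r) :
    f = ∑ i ∈ t, (f %ₘ (h - C (v i))) *
        ∏ j ∈ t.erase i, (C ((v i - v j)⁻¹) * (h - C (v j))) ∧
    f.degree < (h.natDegree * (t.card - 1) + r : ℕ) := by
  have hinterp := eq_compInterpolate_modByMonic hmonic hpos hv hf
  constructor
  · simpa only [compInterpolate, lagrange_basis_comp] using hinterp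
  · exact hinterp ▸ degree_compInterpolate_lt h hv hres

end Field

/-- CRT/Lagrange interpolation form: a polynomial of degree `< s*u` whose residues
modulo the pairwise coprime moduli `h - y i` have degree `< r` equals
`∑ i, f_i(x) * ∏_{j ≠ i} (h(x) - y j)/(y i - y j)`; in particular its degree is
at most `u(s-1) + r - 1`. -/
theorem stmt_1 {F : Type*} [Field F] [Fintype F]
    (h : F[X]) (u r s : ℕ) (hu : 1 ≤ u) (hs : 1 ≤ s)
    (hmonic : h.Monic) (hdeg : h.natDegree = u)
    (hr : 0 < r) (hru : r ≤ u)
    (y : Fin s → F) (hy : Function.Injective y)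
    (f : F[X]) (hf : f.degree < ((s * u : ℕ) : WithBot ℕ))
    (hres : ∀ i : Fin s, (f %ₘ (h - C (y i))).degree < ((r : ℕ) : WithBot ℕ)) :
    f = ∑ i : Fin s, (f %ₘ (h - C (y i))) *
        ∏ j ∈ Finset.univ.erase i, (C ((y i - y j)⁻¹) * (h - C (y j))) ∧
    f.degree ≤ ((u * (s - 1) + r - 1 : ℕ) : WithBot ℕ) := by
  subst hdeg
  have hgeneral := stmt_1_general (t := Finset.univ) hmonic hu hy.injOn
    (by rwa [Finset.card_fin]) fun i _ ↦ hres i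
  exact hgeneral.imp_right fun hlt ↦
    degree_le_sub_one_of_degree_lt (by rwa [Finset.card_fin] at hlt)
end

section
/- Let F be a finite field, let h ∈ F[x] be a monic polynomial of degree u, let 0 < r < u, let 0 < k̄ < n̄, let y_1, …, y_{n̄} ∈ F be pairwise distinct, and for each i ∈ {1,…,n̄} let A_i ⊆ F be a set such that h(α) = y_i for every α ∈ A_i. Suppose f ∈ F[x] satisfies deg(f) < u(k̄−1) + r and, for each i ∈ {1,…,k̄}, the remainder of f upon division by h(x) − y_i has degree < r. Then for EVERY i ∈ {1,…,n̄}, the remainder f_i of f upon division by h(x) − y_i has degree < r, and f(α) = f_i(α) for every α ∈ A_i. -/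
open Polynomial

/-!
In the `h`-adic expansion `f = ∑ j, g j * h ^ j` the remainder modulo `h - y` is obtained by
substituting `y` for `h`, so each of its coefficients is a polynomial function of `y`. For the
coefficient of `X ^ m` with `m ≥ r`, the bound on `deg f` makes the degree of this function smaller
than `k̄ - 1`; as it vanishes at `k̄ - 1` distinct points, it vanishes identically.
-/

section Remainder

variable {R : Type*} [CommRing R] {h : R[X]}

lemma monic_sub_C_of_degree_pos (hmonic : h.Monic) (hpos : 0 < h.degree) (y : R) :
    (h - C y).Monic :=
  hmonic.sub_of_left (degree_C_le.trans_lt hpos)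

lemma degree_divByMonic_lt_of_degree_lt_add_s4 {p q : R[X]} (hq : q.Monic) {N : ℕ}
    (hp : p.degree < ((q.natDegree + N : ℕ) : WithBot ℕ)) : (p /ₘ q).degree < N := by
  nontriviality R
  rcases lt_or_ge p.degree q.degree with hpq | hqp
  · rw [(divByMonic_eq_zero_iff hq).2 hpq, degree_zero]
    exact WithBot.bot_lt_coe N
  · rw [← degree_add_divByMonic hq hqp, Nat.cast_add, degree_eq_natDegree hq.ne_zero] at hp
    exact lt_of_add_lt_add_left hp

lemma modByMonic_sub_C_eq_smul_add (hmonic : h.Monic) (hpos : 0 < h.degree) (f : R[X]) (y : R) :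
    f %ₘ (h - C y) = y • ((f /ₘ h) %ₘ (h - C y)) + f %ₘ h := by
  nontriviality R
  have hdigit : f %ₘ h %ₘ (h - C y) = f %ₘ h := by
    rw [modByMonic_eq_self_iff (monic_sub_C_of_degree_pos hmonic hpos y), degree_sub_C hpos]
    exact degree_modByMonic_lt f hmonic
  have hexpand : f = (h - C y) * (f /ₘ h) + (y • (f /ₘ h) + f %ₘ h) := by
    rw [smul_eq_C_mul]
    linear_combination -modByMonic_add_div f h
  calc f %ₘ (h - C y)
      = ((h - C y) * (f /ₘ h) + (y • (f /ₘ h) + f %ₘ h)) %ₘ (h - C y) := by rw [← hexpand]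
    _ = y • ((f /ₘ h) %ₘ (h - C y)) + f %ₘ h := by
      rw [add_modByMonic, add_modByMonic,
        self_mul_modByMonic (monic_sub_C_of_degree_pos hmonic hpos y), zero_add,
        smul_modByMonic, hdigit]

lemma exists_degree_lt_forall_coeff_modByMonic_sub_C_eq_eval (hmonic : h.Monic)
    (hpos : 0 < h.degree) {m n : ℕ} {f : R[X]}
    (hf : f.degree < ((h.natDegree * n + m : ℕ) : WithBot ℕ)) :
    ∃ P : R[X], P.degree < n ∧ ∀ y, (f %ₘ (h - C y)).coeff m = P.eval y := by
  nontriviality R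
  induction n generalizing f with
  | zero =>
    refine ⟨0, by simp, fun y ↦ ?_⟩
    rw [mul_zero, zero_add] at hf
    rw [eval_zero]
    exact coeff_eq_zero_of_degree_lt (degree_modByMonic_le_left.trans_lt hf)
  | succ n ih =>
    have hquot : (f /ₘ h).degree < ((h.natDegree * n + m : ℕ) : WithBot ℕ) :=
      degree_divByMonic_lt_of_degree_lt_add_s4 hmonic (by convert hf using 2; ring)
    obtain ⟨Q, hQ_degree, hQ_eval⟩ := ih hquot
    refine ⟨Q * X + C ((f %ₘ h).coeff m), ?_, fun y ↦ ?_⟩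
    · refine (degree_add_le _ _).trans_lt (max_lt ?_ (degree_C_le.trans_lt ?_))
      · rw [degree_mul_X, Nat.cast_succ]
        exact WithBot.add_lt_add_right WithBot.one_ne_bot hQ_degree
      · exact mod_cast n.succ_pos
    · rw [modByMonic_sub_C_eq_smul_add hmonic hpos f y, coeff_add, coeff_smul, hQ_eval y,
        smul_eq_mul, eval_add, eval_mul_X, eval_C, mul_comm]

end Remainder

theorem stmt_4_general {R ι : Type*} [CommRing R] [IsDomain R]
    (h : R[X]) (r : ℕ) (hmonic : h.Monic) (hpos : 0 < h.degree)
    (T : Finset ι) (y : ι → R) (hy : Set.InjOn y T)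
    (f : R[X]) (hf : f.degree < ((h.natDegree * T.card + r : ℕ) : WithBot ℕ))
    (hres : ∀ i ∈ T, (f %ₘ (h - C (y i))).degree < r) (z : R) :
    (f %ₘ (h - C z)).degree < r ∧
      ∀ α, h.eval α = z → f.eval α = (f %ₘ (h - C z)).eval α := by
  refine ⟨(degree_lt_iff_coeff_zero _ r).2 fun m hm ↦ ?_, fun α hα ↦ ?_⟩
  · have hfm : f.degree < ((h.natDegree * T.card + m : ℕ) : WithBot ℕ) :=
      hf.trans_le (by gcongr)
    obtain ⟨P, hP_degree, hP_eval⟩ :=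
      exists_degree_lt_forall_coeff_modByMonic_sub_C_eq_eval hmonic hpos hfm
    have hP_root : ∀ i ∈ T, P.eval (y i) = 0 := fun i hi ↦ by
      rw [← hP_eval]
      exact (degree_lt_iff_coeff_zero _ r).1 (hres i hi) m hm
    rw [hP_eval, eq_zero_of_degree_lt_of_eval_index_eq_zero T hy hP_degree hP_root, eval_zero]
  · have hroot : (h - C z).eval α = 0 := by rw [eval_sub, eval_C, hα, sub_self]
    exact (eval₂_modByMonic_eq_self_of_root hroot).symm

/-- Theorem 2(a): if the good polynomial `h` takes the constant value `y i` on
each set `A i`, and the encoding polynomial `f` (degree `< u(k̄-1)+r`, residues of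
degree `< r` modulo `h - y i` for `i < k̄`) is given, then for EVERY `i` the
remainder of `f` modulo `h - y i` has degree `< r` and agrees with `f` on `A i`. -/
theorem stmt_4 {F : Type*} [Field F] [Fintype F]
    (h : F[X]) (u r kb nb : ℕ)
    (hmonic : h.Monic) (hdeg : h.natDegree = u) (hr : 0 < r) (hru : r < u)
    (hk : 0 < kb) (hkn : kb < nb)
    (y : Fin nb → F) (hy : Function.Injective y)
    (A : Fin nb → Set F) (hA : ∀ i : Fin nb, ∀ α ∈ A i, h.eval α = y i)
    (f : F[X]) (hf : f.degree < ((u * (kb - 1) + r : ℕ) : WithBot ℕ))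
    (hres : ∀ i : Fin nb, (i : ℕ) < kb →
      (f %ₘ (h - C (y i))).degree < ((r : ℕ) : WithBot ℕ)) :
    ∀ i : Fin nb,
      (f %ₘ (h - C (y i))).degree < ((r : ℕ) : WithBot ℕ) ∧
      ∀ α ∈ A i, f.eval α = (f %ₘ (h - C (y i))).eval α := by
  have hpos : 0 < h.degree := natDegree_pos_iff_degree_pos.1 (by lia)
  exact fun i ↦ (stmt_4_general h r hmonic hpos (Finset.Iio ⟨kb - 1, by lia⟩) y hy.injOn f
    (by rwa [Fin.card_Iio, hdeg])
    (fun j hj ↦ hres j ((Fin.lt_def.1 (Finset.mem_Iio.1 hj)).trans (by lia))) (y i)).imp_right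
      fun heval α hα ↦ heval α (hA i α hα)
end

section
/- Let F be a finite field, let h ∈ F[x] be a monic polynomial of degree u, let 0 < r < u, let 0 < k̄ < n̄, and let y_1, …, y_{n̄} ∈ F be pairwise distinct. Suppose f ∈ F[x] satisfies deg(f) < u(k̄−1) + r and, for each i ∈ {1,…,k̄}, the remainder of f upon division by h(x) − y_i has degree < r. Then for each j ∈ {0,…,r−1} there exists a polynomial H_j ∈ F[x] with deg(H_j) < k̄ such that for every i ∈ {1,…,n̄}, the coefficient of x^j in the remainder of f upon division by h(x) − y_i equals H_j(y_i). -/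
open Polynomial

/-!
Expand `f` in base `h`: `f = ∑ i < k̄, aᵢ hⁱ` with `deg aᵢ < deg h`. Since `h ≡ c` modulo `h - c`,
the remainder of `f` modulo `h - c` is `∑ i < k̄, cⁱ aᵢ`, whose `j`-th coefficient is the value at
`c` of `H_j = ∑ i < k̄, (coefficient of xʲ in aᵢ) Xⁱ`.
-/

section BaseExpansion

variable {R : Type*}

theorem degree_sum_mul_pow_lt_degree_pow [Semiring R] [Nontrivial R] {h : R[X]} (hh : h.Monic)
    {n : ℕ} {a : Fin n → R[X]} (ha : ∀ i, (a i).degree < h.degree) :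
    (∑ i, a i * h ^ (i : ℕ)).degree < (h ^ n).degree := by
  have hpow (m : ℕ) : (h ^ m).degree = ((m * h.natDegree : ℕ) : WithBot ℕ) := by
    rw [degree_eq_natDegree (hh.pow m).ne_zero, hh.natDegree_pow]
  have hterm (i : Fin n) : (a i * h ^ (i : ℕ)).degree < (h ^ n).degree :=
    calc (a i * h ^ (i : ℕ)).degree
      _ = (a i).degree + (h ^ (i : ℕ)).degree := (hh.pow i).degree_mul
      _ < h.degree + (h ^ (i : ℕ)).degree :=
        WithBot.add_lt_add_right (degree_ne_bot.2 (hh.pow i).ne_zero) (ha i)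
      _ = (h ^ (i + 1 : ℕ)).degree := by rw [pow_succ', (hh.pow i).degree_mul]
      _ ≤ (h ^ n).degree := by
        rw [hpow, hpow]
        exact_mod_cast Nat.mul_le_mul_right _ i.isLt
  exact (degree_sum_le _ _).trans_lt <|
    (Finset.sup_lt_iff <| bot_lt_iff_ne_bot.2 <| degree_ne_bot.2 (hh.pow n).ne_zero).2
      fun i _ => hterm i

theorem exists_eq_sum_mul_pow_of_degree_lt [CommRing R] [Nontrivial R] {h : R[X]} (hh : h.Monic)
    {n : ℕ} {f : R[X]} (hf : f.degree < (h ^ n).degree) :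
    ∃ a : Fin n → R[X], (∀ i, (a i).degree < h.degree) ∧ f = ∑ i, a i * h ^ (i : ℕ) := by
  obtain ⟨q, a, ha, hfa⟩ := eq_quo_mul_pow_add_sum_rem_mul_pow f hh n
  have hdiv : f /ₘ h ^ n = q :=
    (div_modByMonic_unique q _ (hh.pow n)
      ⟨by rw [hfa]; ring, degree_sum_mul_pow_lt_degree_pow hh ha⟩).1
  have hq : q = 0 := hdiv ▸ (divByMonic_eq_zero_iff (hh.pow n)).2 hf
  exact ⟨a, ha, by simpa [hq] using hfa⟩

end BaseExpansion

section ResidueModuloTranslate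

variable {R : Type*} [CommRing R] {h : R[X]}

theorem mul_pow_modByMonic_sub_C (hh : h.Monic) (hpos : 0 < h.natDegree) {a : R[X]}
    (ha : a.degree < h.degree) (i : ℕ) (c : R) :
    (a * h ^ i) %ₘ (h - C c) = c ^ i • a := by
  have : Nontrivial R := Nontrivial.of_polynomial_ne (ne_zero_of_natDegree_gt hpos)
  have hpos' : 0 < h.degree := natDegree_pos_iff_degree_pos.1 hpos
  have hmonic : (h - C c).Monic := hh.sub_of_left (degree_C_le.trans_lt hpos')
  have hdvd : h - C c ∣ a * h ^ i - c ^ i • a := by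
    rw [smul_eq_C_mul, C_pow, mul_comm _ a, ← mul_sub]
    exact (sub_dvd_pow_sub_pow h (C c) i).mul_left a
  rw [modByMonic_eq_of_dvd_sub hmonic hdvd, modByMonic_eq_self_iff hmonic, degree_sub_C hpos']
  exact (degree_smul_le _ _).trans_lt ha

theorem sum_mul_pow_modByMonic_sub_C (hh : h.Monic) (hpos : 0 < h.natDegree) {n : ℕ}
    {a : Fin n → R[X]} (ha : ∀ i, (a i).degree < h.degree) (c : R) :
    (∑ i : Fin n, a i * h ^ (i : ℕ)) %ₘ (h - C c) = ∑ i : Fin n, c ^ (i : ℕ) • a i :=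
  calc (∑ i : Fin n, a i * h ^ (i : ℕ)) %ₘ (h - C c)
    _ = ∑ i : Fin n, (a i * h ^ (i : ℕ)) %ₘ (h - C c) := map_sum (modByMonicHom (h - C c)) _ _
    _ = ∑ i : Fin n, c ^ (i : ℕ) • a i :=
      Finset.sum_congr rfl fun i _ => mul_pow_modByMonic_sub_C hh hpos (ha i) i c

theorem stmt_5_general (hh : h.Monic) (hpos : 0 < h.natDegree) {n : ℕ} {f : R[X]}
    (hf : f.degree < ((h.natDegree * n : ℕ) : WithBot ℕ)) (j : ℕ) :
    ∃ H : R[X], H.degree < (n : WithBot ℕ) ∧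
      ∀ c : R, H.eval c = (f %ₘ (h - C c)).coeff j := by
  have : Nontrivial R := Nontrivial.of_polynomial_ne (ne_zero_of_natDegree_gt hpos)
  have hf' : f.degree < (h ^ n).degree := by
    rwa [degree_eq_natDegree (hh.pow n).ne_zero, hh.natDegree_pow, mul_comm]
  obtain ⟨a, ha, rfl⟩ := exists_eq_sum_mul_pow_of_degree_lt hh hf'
  refine ⟨∑ i, C ((a i).coeff j) * X ^ (i : ℕ), degree_sum_fin_lt _, fun c => ?_⟩
  rw [sum_mul_pow_modByMonic_sub_C hh hpos ha, eval_finsetSum, finsetSum_coeff]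
  refine Finset.sum_congr rfl fun i _ => ?_
  rw [eval_C_mul, eval_pow, eval_X, coeff_smul, smul_eq_mul, mul_comm]

end ResidueModuloTranslate

/-- Theorem 2(b): for each `j < r`, the `j`-th coefficients of the residues of the
encoding polynomial `f` modulo `h - y i`, `i ∈ {1,…,n̄}`, are the evaluations at
`y i` of a single polynomial `H j` of degree `< k̄`; i.e. they form a codeword of
the `[n̄, k̄]` Reed–Solomon code with evaluation points `y 1, …, y n̄`. -/
theorem stmt_5 {F : Type*} [Field F] [Fintype F]
    (h : F[X]) (u r kb nb : ℕ)
    (hmonic : h.Monic) (hdeg : h.natDegree = u) (hr : 0 < r) (hru : r < u)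
    (hk : 0 < kb) (hkn : kb < nb)
    (y : Fin nb → F) (hy : Function.Injective y)
    (f : F[X]) (hf : f.degree < ((u * (kb - 1) + r : ℕ) : WithBot ℕ))
    (hres : ∀ i : Fin nb, (i : ℕ) < kb →
      (f %ₘ (h - C (y i))).degree < ((r : ℕ) : WithBot ℕ)) :
    ∀ j : ℕ, j < r →
      ∃ H : F[X], H.degree < ((kb : ℕ) : WithBot ℕ) ∧
        ∀ i : Fin nb, H.eval (y i) = (f %ₘ (h - C (y i))).coeff j := by
  intro j _
  have hbound : u * (kb - 1) + r ≤ h.natDegree * kb :=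
    calc u * (kb - 1) + r
      _ ≤ u * (kb - 1) + u := by omega
      _ = h.natDegree * kb := by rw [hdeg, ← mul_add_one, Nat.sub_one_add_one hk.ne']
  obtain ⟨H, hHdeg, hHeval⟩ :=
    stmt_5_general hmonic (by omega) (hf.trans_le (by exact_mod_cast hbound)) j
  exact ⟨H, hHdeg, fun i => hHeval (y i)⟩
end

section
/- Let F be a finite field, let h ∈ F[x] be a monic polynomial of degree u, let 0 < r < u, let 0 < k̄ < n̄, let y_1, …, y_{n̄} ∈ F be pairwise distinct, and for each i ∈ {1,…,n̄} let A_i ⊆ F be a set of exactly u distinct elements such that h(α) = y_i for every α ∈ A_i. Let f, g ∈ F[x] both satisfy deg < u(k̄−1) + r and have remainders of degree < r upon division by h(x) − y_i for each i ∈ {1,…,k̄}. Fix τ ∈ {1,…,n̄} and an integer ε with u − r < ε ≤ u, and let f_τ, g_τ denote the remainders of f, g upon division by h(x) − y_τ. If the coefficient of x^{r−t} in f_τ equals the coefficient of x^{r−t} in g_τ for every t ∈ {1,…,ε−u+r}, and f(α) = g(α) for all α in some subset B ⊆ A_τ with |B| = u − ε, then f(α) = g(α) for all α ∈ A_τ.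 -/
open Polynomial

/-!
Dividing `p` by `h` once gives the Horner-type recursion
`p mod (h - a) = (p mod h) + a * ((p / h) mod (h - a))`, so if `deg p < k * deg h`, then each
coefficient of `p mod (h - a)` is a polynomial in `a` of degree `< k`. Hence the coefficients of
index `≥ r`, which vanish for `k` distinct values of `a`, vanish for every `a`, and in particular
the residues of `f` and `g` on the failed rack have degree `< r`. Their difference has degree
below the number of surviving nodes once its top coefficients are known to vanish; as it vanishes
at these nodes, it is zero.
-/

section CommRing

variable {R : Type*} [CommRing R] {h p : R[X]}

theorem degree_divByMonic_lt_of_degree_lt_natDegree_add (hh : h.Monic) {m : ℕ}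
    (hp : p.degree < ((h.natDegree + m : ℕ) : WithBot ℕ)) : (p /ₘ h).degree < m := by
  by_cases hq : p /ₘ h = 0
  · simp [hq]
  · have hp0 : p ≠ 0 := by rintro rfl; simp at hq
    have : Nontrivial R := Nontrivial.of_polynomial_ne hp0
    have hle : h.natDegree ≤ p.natDegree :=
      natDegree_le_natDegree (not_lt.1 (mt (divByMonic_eq_zero_iff hh).2 hq))
    rw [← natDegree_lt_iff_degree_lt hp0] at hp
    rw [← natDegree_lt_iff_degree_lt hq, natDegree_divByMonic p hh]
    omega

theorem modByMonic_sub_C_eq_modByMonic_add (hh : h.Monic) (hpos : 0 < h.degree) (p : R[X])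
    (a : R) : p %ₘ (h - C a) = p %ₘ h + C a * ((p /ₘ h) %ₘ (h - C a)) := by
  have : Nontrivial R := Nontrivial.of_polynomial_ne (ne_zero_of_degree_gt hpos)
  have hmonic : (h - C a).Monic := hh.sub_of_left (degree_C_le.trans_lt hpos)
  have hrem : (p %ₘ h).degree < (h - C a).degree := by
    rw [degree_sub_C hpos]
    exact degree_modByMonic_lt p hh
  calc p %ₘ (h - C a)
      = (p %ₘ h + C a * (p /ₘ h)) %ₘ (h - C a) :=
        modByMonic_eq_of_dvd_sub hmonic
          ⟨p /ₘ h, by linear_combination -modByMonic_add_div p h⟩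
    _ = p %ₘ h + C a * ((p /ₘ h) %ₘ (h - C a)) := by
        rw [add_modByMonic, (modByMonic_eq_self_iff hmonic).2 hrem, ← smul_eq_C_mul,
          smul_modByMonic, smul_eq_C_mul]

theorem exists_degree_lt_forall_eval_eq_coeff_modByMonic_sub_C (hh : h.Monic)
    (hpos : 0 < h.degree) (j : ℕ) {k : ℕ}
    (hp : p.degree < ((h.natDegree * k : ℕ) : WithBot ℕ)) :
    ∃ P : R[X], P.degree < k ∧ ∀ a, P.eval a = (p %ₘ (h - C a)).coeff j := by
  induction k generalizing p with
  | zero =>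
    obtain rfl : p = 0 := by simpa using hp
    exact ⟨0, by simp⟩
  | succ k ih =>
    obtain ⟨Q, hQdeg, hQ⟩ := ih (degree_divByMonic_lt_of_degree_lt_natDegree_add hh
      (by rwa [add_comm, ← Nat.mul_succ]))
    refine ⟨C ((p %ₘ h).coeff j) + X * Q, ?_, fun a ↦ ?_⟩
    · rw [degree_lt_iff_coeff_zero] at hQdeg ⊢
      rintro (_ | m) hm
      · omega
      · simpa [coeff_C_succ] using hQdeg m (by omega)
    · rw [modByMonic_sub_C_eq_modByMonic_add hh hpos]
      simp [hQ]

theorem eval_modByMonic_sub_C_of_eval_eq (p : R[X]) {a x : R} (hx : h.eval x = a) :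
    (p %ₘ (h - C a)).eval x = p.eval x :=
  eval₂_modByMonic_eq_self_of_root (f := RingHom.id R) (by simp [hx])

end CommRing

section IsDomain

variable {R : Type*} [CommRing R] [IsDomain R]

theorem degree_modByMonic_sub_C_lt_of_forall_mem {ι : Type*} {h p : R[X]} (hh : h.Monic)
    (hpos : 0 < h.degree) {s : Finset ι} {y : ι → R} (hy : Set.InjOn y s)
    (hp : p.degree < ((h.natDegree * s.card : ℕ) : WithBot ℕ)) {r : ℕ}
    (hres : ∀ i ∈ s, (p %ₘ (h - C (y i))).degree < r) (a : R) :
    (p %ₘ (h - C a)).degree < r := by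
  rw [degree_lt_iff_coeff_zero]
  intro j hj
  obtain ⟨P, hPdeg, hP⟩ :=
    exists_degree_lt_forall_eval_eq_coeff_modByMonic_sub_C hh hpos j hp
  have hP0 : P = 0 := eq_zero_of_degree_lt_of_eval_index_eq_zero _ hy hPdeg fun i hi ↦
    (hP (y i)).trans (coeff_eq_zero_of_degree_lt ((hres i hi).trans_le (by exact_mod_cast hj)))
  rw [← hP, hP0, eval_zero]

theorem eq_of_degree_lt_of_coeff_eq_of_eval_finset_eq {p q : R[X]} {r : ℕ} (hp : p.degree < r)
    (hq : q.degree < r) {B : Finset R}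
    (hcoeff : ∀ j, B.card ≤ j → j < r → p.coeff j = q.coeff j)
    (heval : ∀ x ∈ B, p.eval x = q.eval x) : p = q := by
  refine eq_of_degree_sub_lt_of_eval_finset_eq B ?_ heval
  rw [degree_lt_iff_coeff_zero] at hp hq ⊢
  intro j hj
  rw [coeff_sub, sub_eq_zero]
  obtain hjr | hrj := lt_or_ge j r
  · exact hcoeff j hj hjr
  · rw [hp j hrj, hq j hrj]

theorem stmt_13_general {ι : Type*} {h f g : R[X]} (hh : h.Monic) (hpos : 0 < h.degree)
    {s : Finset ι} {y : ι → R} (hy : Set.InjOn y s)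
    (hf : f.degree < ((h.natDegree * s.card : ℕ) : WithBot ℕ))
    (hg : g.degree < ((h.natDegree * s.card : ℕ) : WithBot ℕ)) {r : ℕ}
    (hfres : ∀ i ∈ s, (f %ₘ (h - C (y i))).degree < r)
    (hgres : ∀ i ∈ s, (g %ₘ (h - C (y i))).degree < r) {a : R} {B : Finset R}
    (hB : ∀ x ∈ B, h.eval x = a)
    (hcoeff : ∀ j, B.card ≤ j → j < r →
      (f %ₘ (h - C a)).coeff j = (g %ₘ (h - C a)).coeff j)
    (heval : ∀ x ∈ B, f.eval x = g.eval x) {x : R} (hx : h.eval x = a) :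
    f.eval x = g.eval x := by
  have hmod : f %ₘ (h - C a) = g %ₘ (h - C a) :=
    eq_of_degree_lt_of_coeff_eq_of_eval_finset_eq
      (degree_modByMonic_sub_C_lt_of_forall_mem hh hpos hy hf hfres a)
      (degree_modByMonic_sub_C_lt_of_forall_mem hh hpos hy hg hgres a) hcoeff fun b hb ↦ by
        simpa only [eval_modByMonic_sub_C_of_eval_eq _ (hB b hb)] using heval b hb
  rw [← eval_modByMonic_sub_C_of_eval_eq f hx, hmod, eval_modByMonic_sub_C_of_eval_eq g hx]

end IsDomain

/-- Algebraic core of the repair of a rack with `ε > u - r` failures: if the top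
`ε - u + r` coefficients of the residue polynomials of two encoding polynomials
modulo `h - y τ` agree, and the polynomials agree on `u - ε` surviving points of
the rack `A τ`, then they agree on all of `A τ`. -/
theorem stmt_13 {F : Type*} [Field F] [Fintype F]
    (h : F[X]) (u r kb nb : ℕ)
    (hmonic : h.Monic) (hdeg : h.natDegree = u) (hr : 0 < r) (hru : r < u)
    (hk : 0 < kb) (hkn : kb < nb)
    (y : Fin nb → F) (hy : Function.Injective y)
    (A : Fin nb → Finset F) (hcard : ∀ i, (A i).card = u)
    (hA : ∀ i : Fin nb, ∀ α ∈ A i, h.eval α = y i)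
    (f g : F[X])
    (hfdeg : f.degree < ((u * (kb - 1) + r : ℕ) : WithBot ℕ))
    (hgdeg : g.degree < ((u * (kb - 1) + r : ℕ) : WithBot ℕ))
    (hfres : ∀ i : Fin nb, (i : ℕ) < kb →
      (f %ₘ (h - C (y i))).degree < ((r : ℕ) : WithBot ℕ))
    (hgres : ∀ i : Fin nb, (i : ℕ) < kb →
      (g %ₘ (h - C (y i))).degree < ((r : ℕ) : WithBot ℕ))
    (τ : Fin nb) (ε : ℕ) (hε1 : u - r < ε) (hε2 : ε ≤ u)
    (hcoeff : ∀ t : ℕ, 1 ≤ t → t ≤ ε + r - u →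
      (f %ₘ (h - C (y τ))).coeff (r - t) = (g %ₘ (h - C (y τ))).coeff (r - t))
    (B : Finset F) (hB : B ⊆ A τ) (hBcard : B.card = u - ε)
    (heq : ∀ α ∈ B, f.eval α = g.eval α) :
    ∀ α ∈ A τ, f.eval α = g.eval α := by
  subst hdeg
  let s : Finset (Fin nb) := {i | i < kb}
  have hs : s.card = kb := by simp [s, Fin.card_filter_val_lt, hkn.le]
  have hbound : h.natDegree * (kb - 1) + r ≤ h.natDegree * s.card :=
    calc h.natDegree * (kb - 1) + r
        ≤ h.natDegree * (kb - 1) + h.natDegree := by gcongr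
      _ = h.natDegree * s.card := by
        rw [← Nat.mul_succ, Nat.succ_eq_add_one, Nat.sub_one_add_one hk.ne', hs]
  intro α hα
  refine stmt_13_general hmonic (natDegree_pos_iff_degree_pos.1 (hr.trans hru))
    (s := s) hy.injOn (hfdeg.trans_le (by exact_mod_cast hbound))
    (hgdeg.trans_le (by exact_mod_cast hbound))
    (by simpa [s] using hfres) (by simpa [s] using hgres) (fun b hb ↦ hA τ b (hB hb))
    (fun j hBj hjr ↦ ?_) heq (hA τ α hα)
  simpa [Nat.sub_sub_self hjr.le] using hcoeff (r - j) (by omega) (by omega)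
end
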